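/- Let q ≥ 2 be an integer, 1 − 1/(2q) < H < 1, and let c_{2,q,H} > 0 be the constant for which V_n/(c_{2,q,H} n^{1−q(1−H)}) converges in L²(Ω) to a random variable Z with E Z² = 1. Then ε^{1/(1−q(1−H))} · Σ_{n≥1} P(|V_n| > ε n^{2−2q(1−H)}) converges to c_{2,q,H}^{1/(1−q(1−H))} · E|Z|^{1/(1−q(1−H))} as ε → 0⁺ (Hsu–Robbins theorem for the variations of fractional Brownian motion, non-central regime). -/

import Mathlib

open MeasureTheory ProbabilityTheory Filter Real Topology

/-- A (centered) fractional Brownian motion with Hurst parameter `H`: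
all finite-dimensional distributions are centered Gaussian (equivalently, every finite
linear combination of values of the process is a centered real Gaussian), with covariance
`E (B s * B t) = (s^(2H) + t^(2H) - |t-s|^(2H)) / 2` for nonnegative times. -/
structure IsFractionalBrownianMotion {Ω : Type*} [MeasureSpace Ω]
    (B : ℝ → Ω → ℝ) (H : ℝ) : Prop where
  measurable : ∀ t : ℝ, Measurable (B t)
  gaussian_fdd : ∀ (n : ℕ) (t : Fin n → ℝ), (∀ i, 0 ≤ t i) → ∀ c : Fin n → ℝ,
    ∃ v : NNReal,
      Measure.map (fun ω => ∑ i, c i * B (t i) ω) (ℙ : Measure Ω) = gaussianReal 0 v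
  covariance : ∀ s t : ℝ, 0 ≤ s → 0 ≤ t →
    ∫ ω, B s ω * B t ω ∂(ℙ : Measure Ω)
      = (s ^ (2 * H) + t ^ (2 * H) - |t - s| ^ (2 * H)) / 2

/-- `V_n = ∑_{k=0}^{n-1} H_q (n^H (B_{(k+1)/n} - B_{k/n}))`, where `H_q` is the Hermite
polynomial of degree `q`. -/
noncomputable def hermiteVariation {Ω : Type*} [MeasureSpace Ω]
    (B : ℝ → Ω → ℝ) (H : ℝ) (q n : ℕ) (ω : Ω) : ℝ :=
  ∑ k ∈ Finset.range n,
    Polynomial.aeval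
      ((n : ℝ) ^ H * (B (((k : ℝ) + 1) / n) ω - B ((k : ℝ) / n) ω))
      (Polynomial.hermite q)

/-!
Write `X n = |V n| / (c n ^ a)` and `δ = (ε / c) ^ b⁻¹`, so that `ε n ^ (a + b) < |V n|` means
`(δ n) ^ b < X n`. Then `δ ∑ P ((δ n) ^ b < X n)` is a Riemann sum of mesh `δ` for the layer-cake
integral `∫₀^∞ P (t ^ b < |Z|) dt = E |Z| ^ b⁻¹`, with an integrand that moves with the mesh. As
`X n → |Z|` in distribution, the integrands converge wherever `t ^ b` is not an atom of `|Z|`, and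
Markov's inequality for the bounded `p`-th moments dominates them by a multiple of
`min 1 (t ^ (-b p))`, which is integrable because `b p > 1`. Here `a = b = 1 - q (1 - H)` and
`p = 2`, and `b p > 1` is the condition `1 - 1 / (2 q) < H`.
-/

open scoped ENNReal

section RiemannSums

lemma lintegral_Ioi_floor_div (f : ℕ → ℝ≥0∞) {δ : ℝ} (hδ : 0 < δ) :
    ∫⁻ t in Set.Ioi (0 : ℝ), f ⌊t / δ⌋₊ = ENNReal.ofReal δ * ∑' k, f k := by
  have hfloor : Measurable fun t : ℝ ↦ ⌊t / δ⌋₊ := (measurable_id.div_const δ).nat_floor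
  have hfiber (k : ℕ) :
      (fun t : ℝ ↦ ⌊t / δ⌋₊) ⁻¹' {k} ∩ Set.Ici 0 = Set.Ico (k * δ) ((k + 1) * δ) := by
    ext t
    simp only [Set.mem_inter_iff, Set.mem_preimage, Set.mem_singleton_iff, Set.mem_Ici,
      Set.mem_Ico, ← le_div_iff₀ hδ, ← div_lt_iff₀ hδ]
    constructor
    · rintro ⟨hk, ht⟩
      exact (Nat.floor_eq_iff (by positivity)).1 hk
    · intro hk
      have ht : 0 ≤ t / δ := k.cast_nonneg.trans hk.1
      exact ⟨(Nat.floor_eq_iff ht).2 hk, by simpa [hδ.ne'] using mul_nonneg ht hδ.le⟩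
  rw [restrict_Ioi_eq_restrict_Ici, ← lintegral_map measurable_from_nat hfloor,
    lintegral_countable', ← ENNReal.tsum_mul_left]
  refine tsum_congr fun k ↦ ?_
  rw [Measure.map_apply hfloor (measurableSet_singleton k),
    Measure.restrict_apply (hfloor (measurableSet_singleton k)), hfiber, Real.volume_Ico, mul_comm,
    add_one_mul, add_sub_cancel_left]

lemma tendsto_floor_div_add_one {t : ℝ} (ht : 0 < t) :
    Tendsto (fun δ : ℝ ↦ (⌊t / δ⌋₊ + 1, δ * (⌊t / δ⌋₊ + 1))) (𝓝[>] 0) (atTop ×ˢ 𝓝 t) := by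
  have hinv : Tendsto (fun δ : ℝ ↦ t / δ) (𝓝[>] 0) atTop :=
    tendsto_inv_nhdsGT_zero.const_mul_atTop ht
  have hδ : Tendsto (fun δ : ℝ ↦ δ) (𝓝[>] 0) (𝓝 0) := nhdsWithin_le_nhds
  refine ((tendsto_add_atTop_nat 1).comp (tendsto_nat_floor_atTop.comp hinv)).prodMk ?_
  have hnode : Tendsto (fun δ : ℝ ↦ (⌊t * δ⁻¹⌋₊ : ℝ) / δ⁻¹ + δ) (𝓝[>] 0) (𝓝 (t + 0)) :=
    ((tendsto_nat_floor_mul_div_atTop ht.le).comp tendsto_inv_nhdsGT_zero).add hδ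
  rw [add_zero] at hnode
  refine hnode.congr fun δ ↦ ?_
  rw [div_inv_eq_mul, div_eq_mul_inv]
  ring

-- The bound is only required for `t ≤ n`: a Riemann sum of mesh `δ ≤ 1` evaluates `F n` at `δ * n`.
theorem tendsto_mul_tsum_of_dominated {F : ℕ → ℝ → ℝ≥0∞} {G φ : ℝ → ℝ≥0∞}
    (hφ_anti : AntitoneOn φ (Set.Ioi 0)) (hφ_int : ∫⁻ t in Set.Ioi 0, φ t ≠ ∞)
    (hF_le : ∀ (n : ℕ) (t : ℝ), 0 < t → t ≤ n → F n t ≤ φ t)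
    (hF_lim : ∀ᵐ t ∂volume.restrict (Set.Ioi 0),
      Tendsto (fun x : ℕ × ℝ ↦ F x.1 x.2) (atTop ×ˢ 𝓝 t) (𝓝 (G t))) :
    Tendsto (fun δ : ℝ ↦ ENNReal.ofReal δ * ∑' k : ℕ, F (k + 1) (δ * (k + 1)))
      (𝓝[>] 0) (𝓝 (∫⁻ t in Set.Ioi 0, G t)) := by
  have hsum : (fun δ : ℝ ↦ ∫⁻ t in Set.Ioi 0, F (⌊t / δ⌋₊ + 1) (δ * (⌊t / δ⌋₊ + 1))) =ᶠ[𝓝[>] 0]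
      fun δ ↦ ENNReal.ofReal δ * ∑' k : ℕ, F (k + 1) (δ * (k + 1)) := by
    filter_upwards [self_mem_nhdsWithin] with δ hδ
    exact lintegral_Ioi_floor_div (fun k ↦ F (k + 1) (δ * (k + 1))) hδ
  refine Tendsto.congr' hsum (tendsto_lintegral_filter_of_dominated_convergence φ ?_ ?_ hφ_int ?_)
  · refine .of_forall fun δ ↦ ?_
    exact (measurable_from_nat (f := fun k ↦ F (k + 1) (δ * (k + 1)))).comp
      (measurable_id.div_const δ).nat_floor
  · filter_upwards [Ioc_mem_nhdsGT one_pos] with δ ⟨hδ, hδ_le⟩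
    filter_upwards [ae_restrict_mem measurableSet_Ioi] with t ht
    have ht_le : t ≤ δ * (⌊t / δ⌋₊ + 1) := (div_le_iff₀' hδ).1 (Nat.lt_floor_add_one _).le
    have hnode_pos : 0 < δ * ((⌊t / δ⌋₊ : ℝ) + 1) := by positivity
    refine (hF_le _ _ hnode_pos ?_).trans (hφ_anti ht hnode_pos ht_le)
    exact_mod_cast mul_le_of_le_one_left (by positivity) hδ_le
  · filter_upwards [hF_lim, ae_restrict_mem measurableSet_Ioi] with t hlim ht
    exact hlim.comp (tendsto_floor_div_add_one ht)

lemma lintegral_Ioi_min_one_rpow_ne_top {C : ℝ≥0∞} (hC : C ≠ ∞) {r : ℝ} (hr : 1 < r) :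
    ∫⁻ t in Set.Ioi 0, min 1 (C * ENNReal.ofReal (t ^ (-r))) ≠ ∞ := by
  have hnear : ∫⁻ t in Set.Ioc 0 1, min 1 (C * ENNReal.ofReal (t ^ (-r))) ≠ ∞ := by
    refine ne_top_of_le_ne_top ?_ (lintegral_mono fun t ↦ min_le_left _ _)
    simp
  have hfar : ∫⁻ t in Set.Ioi 1, min 1 (C * ENNReal.ofReal (t ^ (-r))) ≠ ∞ := by
    refine ne_top_of_le_ne_top ?_ (lintegral_mono fun t ↦ min_le_right _ _)
    rw [lintegral_const_mul' _ _ hC]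
    have hint : IntegrableOn (fun t : ℝ ↦ t ^ (-r)) (Set.Ioi 1) :=
      integrableOn_Ioi_rpow_of_lt (neg_lt_neg hr) one_pos
    exact ENNReal.mul_ne_top hC hint.lintegral_lt_top.ne
  rw [← Set.Ioc_union_Ioi_eq_Ioi zero_le_one]
  exact ne_top_of_le_ne_top (ENNReal.add_ne_top.2 ⟨hnear, hfar⟩) (lintegral_union_le _ _ _)

end RiemannSums

section Tails

variable {Ω Ω' : Type*} [MeasurableSpace Ω] [MeasurableSpace Ω'] {μ : Measure Ω} {ν : Measure Ω'}

lemma lintegral_posPart_rpow_inv_eq_lintegral_meas_rpow_lt {Y : Ω → ℝ} (hY : AEMeasurable Y μ)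
    {b : ℝ} (hb : 0 < b) :
    ∫⁻ ω, ENNReal.ofReal ((Y ω)⁺ ^ b⁻¹) ∂μ = ∫⁻ t in Set.Ioi 0, μ {ω | t ^ b < Y ω} := by
  have hpow : AEMeasurable (fun ω ↦ (Y ω)⁺ ^ b⁻¹) μ := (hY.sup_const 0).pow_const _
  rw [lintegral_eq_lintegral_meas_lt μ (.of_forall fun ω ↦ by positivity) hpow]
  refine setLIntegral_congr_fun measurableSet_Ioi fun t (ht : 0 < t) ↦ ?_
  have hiff (y : ℝ) : t < y⁺ ^ b⁻¹ ↔ t ^ b < y := by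
    rw [Real.lt_rpow_inv_iff_of_pos ht.le (posPart_nonneg y) hb, posPart_def, lt_sup_iff,
      or_iff_left (rpow_pos_of_pos ht b).not_gt]
  simp only [hiff]

lemma ae_measure_eq_rpow_eq_zero [SFinite μ] {Y : Ω → ℝ} (hY : AEMeasurable Y μ) {b : ℝ}
    (hb : b ≠ 0) :
    ∀ᵐ t ∂volume.restrict (Set.Ioi 0), μ {ω | Y ω = t ^ b} = 0 := by
  have hlevels : {s : ℝ | 0 < μ {ω | Y ω = s}}.Countable :=
    Measure.countable_meas_level_set_pos₀ hY.nullMeasurable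
  have hpreimage : ({t : ℝ | 0 < μ {ω | Y ω = t ^ b}} ∩ Set.Ioi 0).Countable :=
    Set.MapsTo.countable_of_injOn (f := (· ^ b)) (fun _ ht ↦ ht.1)
      ((rpow_left_injOn hb).mono fun _ ht ↦ (Set.mem_Ioi.1 ht.2).le) hlevels
  filter_upwards [ae_restrict_of_ae (hpreimage.ae_notMem volume),
    ae_restrict_mem measurableSet_Ioi] with t hnot ht
  exact nonpos_iff_eq_zero.1 (not_lt.1 fun hpos ↦ hnot ⟨hpos, ht⟩)

lemma tendsto_measure_lt_of_tendstoInDistribution [IsProbabilityMeasure μ] [IsProbabilityMeasure ν]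
    {ι : Type*} {l : Filter ι} [l.IsCountablyGenerated] {X : ι → Ω → ℝ} {Y : Ω' → ℝ}
    (h : TendstoInDistribution X l Y (fun _ ↦ μ) ν) {t : ℝ} (ht : ν {ω | Y ω = t} = 0) :
    Tendsto (fun x : ι × ℝ ↦ μ {ω | x.2 < X x.1 ω}) (l ×ˢ 𝓝 t) (𝓝 (ν {ω | t < Y ω})) := by
  have hX : TendstoInDistribution (fun x : ι × ℝ ↦ X x.1) (l ×ˢ 𝓝 t) Y (fun _ ↦ μ) ν :=
    ⟨fun x ↦ h.forall_aemeasurable x.1, h.aemeasurable_limit, h.tendsto.comp tendsto_fst⟩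
  have hthreshold :
      TendstoInMeasure μ (fun (x : ι × ℝ) _ ↦ x.2) (l ×ˢ 𝓝 t) (fun _ ↦ t) := by
    intro η hη
    refine tendsto_const_nhds.congr' ?_
    filter_upwards [tendsto_snd.eventually (Metric.eball_mem_nhds t hη)] with x hx
    simp [(Metric.mem_eball.1 hx).not_ge]
  have hsub := hX.continuous_comp_prodMk_of_tendstoInMeasure_const
    (g := fun z : ℝ × ℝ ↦ z.1 - z.2) (by fun_prop) hthreshold fun _ ↦ aemeasurable_const
  have hfrontier : (ν.map fun ω ↦ Y ω - t) (frontier (Set.Ioi 0)) = 0 := by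
    rw [frontier_Ioi, Measure.map_apply_of_aemeasurable hsub.aemeasurable_limit
      (measurableSet_singleton 0)]
    simpa [Set.preimage, sub_eq_zero] using ht
  have hlim :=
    ProbabilityMeasure.tendsto_measure_of_null_frontier_of_tendsto' hsub.tendsto hfrontier
  simpa [Measure.map_apply_of_aemeasurable (hsub.forall_aemeasurable _) measurableSet_Ioi,
    Measure.map_apply_of_aemeasurable hsub.aemeasurable_limit measurableSet_Ioi,
    Set.preimage] using hlim

lemma measure_lt_le_eLpNorm_rpow_mul {f : Ω → ℝ} (hf : AEMeasurable f μ) {p : ℝ≥0∞} (hp₀ : p ≠ 0)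
    (hp : p ≠ ∞) {s : ℝ} (hs : 0 < s) :
    μ {ω | s < f ω} ≤ eLpNorm f p μ ^ p.toReal * ENNReal.ofReal (s ^ (-p.toReal)) := by
  have hs' : ENNReal.ofReal s ≠ 0 := by simpa using hs
  calc μ {ω | s < f ω}
    _ ≤ μ {ω | ENNReal.ofReal s ≤ ‖f ω‖ₑ} := by
      refine measure_mono fun ω (hω : s < f ω) ↦ ?_
      rw [Set.mem_ofPred_eq, ← ofReal_norm]
      exact ENNReal.ofReal_le_ofReal (hω.le.trans (le_abs_self _))
    _ ≤ (ENNReal.ofReal s)⁻¹ ^ p.toReal * eLpNorm f p μ ^ p.toReal :=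
      meas_ge_le_mul_pow_eLpNorm_enorm μ hp₀ hp hf.aestronglyMeasurable hs' (by simp)
    _ = eLpNorm f p μ ^ p.toReal * ENNReal.ofReal (s ^ (-p.toReal)) := by
      rw [mul_comm, ENNReal.inv_rpow, ← ENNReal.rpow_neg, ENNReal.ofReal_rpow_of_pos hs]

lemma exists_eventually_eLpNorm_le_of_tendsto {ι E : Type*} [NormedAddCommGroup E] {l : Filter ι}
    {X : ι → Ω → E} {Y : Ω → E} {p : ℝ≥0∞} (hX : ∀ i, AEStronglyMeasurable (X i) μ)
    (hY : MemLp Y p μ) (h : Tendsto (fun i ↦ eLpNorm (X i - Y) p μ) l (𝓝 0)) :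
    ∃ M ≠ ∞, ∀ᶠ i in l, eLpNorm (X i) p μ ≤ M := by
  refine ⟨ENNReal.LpAddConst p * (1 + eLpNorm Y p μ), ?_, ?_⟩
  · exact ENNReal.mul_ne_top (ENNReal.LpAddConst_lt_top p).ne
      (ENNReal.add_ne_top.2 ⟨ENNReal.one_ne_top, hY.eLpNorm_ne_top⟩)
  · filter_upwards [h.eventually_le_const one_pos] with i hi
    calc eLpNorm (X i) p μ
      _ = eLpNorm ((X i - Y) + Y) p μ := by rw [sub_add_cancel]
      _ ≤ ENNReal.LpAddConst p * (eLpNorm (X i - Y) p μ + eLpNorm Y p μ) :=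
        eLpNorm_add_le' ((hX i).sub hY.1) hY.1 p
      _ ≤ ENNReal.LpAddConst p * (1 + eLpNorm Y p μ) := by gcongr

lemma integrable_posPart_rpow [IsFiniteMeasure μ] {Y : Ω → ℝ} {p : ℝ≥0∞} (hY : MemLp Y p μ) {r : ℝ}
    (hr : 0 ≤ r) (hrp : ENNReal.ofReal r ≤ p) : Integrable (fun ω ↦ (Y ω)⁺ ^ r) μ := by
  have hnorm := (hY.pos_part.mono_exponent hrp).integrable_norm_rpow'
  rw [ENNReal.toReal_ofReal hr] at hnorm
  simpa only [← posPart_def, norm_of_nonneg (posPart_nonneg _)] using hnorm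

end Tails

section SeriesOfTails

variable {Ω Ω' : Type*} [MeasurableSpace Ω] [MeasurableSpace Ω'] {μ : Measure Ω} {ν : Measure Ω'}
  [IsProbabilityMeasure μ] [IsProbabilityMeasure ν]

-- Since `t ≤ n`, the factor `C * t ^ (-(b * r))` exceeds `1` for the finitely many `n < N`
-- without a tail bound as soon as `N ^ (b * r) ≤ C`.
lemma exists_measure_rpow_lt_le_min_one {X : ℕ → Ω → ℝ} {b r : ℝ} (hbr : 0 ≤ b * r) {M : ℝ≥0∞}
    (hM : M ≠ ∞)
    (htail : ∀ᶠ n in atTop, ∀ s > 0, μ {ω | s < X n ω} ≤ M * ENNReal.ofReal (s ^ (-r))) :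
    ∃ C ≠ ∞, ∀ (n : ℕ) (t : ℝ), 0 < t → t ≤ n →
      μ {ω | t ^ b < X n ω} ≤ min 1 (C * ENNReal.ofReal (t ^ (-(b * r)))) := by
  obtain ⟨N, hN⟩ := eventually_atTop.1 htail
  refine ⟨max M (ENNReal.ofReal (N ^ (b * r))), by simp [hM], fun n t ht htn ↦
    le_min prob_le_one ?_⟩
  rcases le_or_gt N n with hNn | hnN
  · calc μ {ω | t ^ b < X n ω}
      _ ≤ M * ENNReal.ofReal ((t ^ b) ^ (-r)) := hN n hNn _ (rpow_pos_of_pos ht b)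
      _ = M * ENNReal.ofReal (t ^ (-(b * r))) := by rw [← rpow_mul ht.le, mul_neg]
      _ ≤ max M _ * ENNReal.ofReal (t ^ (-(b * r))) := by gcongr; exact le_max_left _ _
  · have htN : t ≤ N := htn.trans (by exact_mod_cast hnN.le)
    calc μ {ω | t ^ b < X n ω}
      _ ≤ ENNReal.ofReal (t ^ (b * r) * t ^ (-(b * r))) := by
        rw [← rpow_add ht, add_neg_cancel, rpow_zero, ENNReal.ofReal_one]
        exact prob_le_one
      _ ≤ ENNReal.ofReal (N ^ (b * r)) * ENNReal.ofReal (t ^ (-(b * r))) := by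
        rw [← ENNReal.ofReal_mul (by positivity)]
        gcongr
      _ ≤ max M _ * ENNReal.ofReal (t ^ (-(b * r))) := by gcongr; exact le_max_right _ _

theorem tendsto_mul_tsum_measure_rpow_lt {X : ℕ → Ω → ℝ} {Y : Ω' → ℝ} {b r : ℝ} (hb : 0 < b)
    (hbr : 1 < b * r) (h : TendstoInDistribution X atTop Y (fun _ ↦ μ) ν) {M : ℝ≥0∞} (hM : M ≠ ∞)
    (htail : ∀ᶠ n in atTop, ∀ s > 0, μ {ω | s < X n ω} ≤ M * ENNReal.ofReal (s ^ (-r))) :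
    Tendsto (fun δ : ℝ ↦ ENNReal.ofReal δ * ∑' k : ℕ, μ {ω | (δ * (k + 1)) ^ b < X (k + 1) ω})
      (𝓝[>] 0) (𝓝 (∫⁻ ω, ENNReal.ofReal ((Y ω)⁺ ^ b⁻¹) ∂ν)) := by
  have hbr₀ : 0 ≤ b * r := zero_le_one.trans hbr.le
  obtain ⟨C, hC, hle⟩ := exists_measure_rpow_lt_le_min_one hbr₀ hM htail
  rw [lintegral_posPart_rpow_inv_eq_lintegral_meas_rpow_lt h.aemeasurable_limit hb]
  refine tendsto_mul_tsum_of_dominated (F := fun n t ↦ μ {ω | t ^ b < X n ω}) ?_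
    (lintegral_Ioi_min_one_rpow_ne_top hC hbr) hle ?_
  · intro s hs t _ hst
    have hanti : t ^ (-(b * r)) ≤ s ^ (-(b * r)) :=
      rpow_le_rpow_of_nonpos hs hst (neg_nonpos.2 hbr₀)
    dsimp only
    gcongr
  · filter_upwards [ae_measure_eq_rpow_eq_zero h.aemeasurable_limit hb.ne'] with t ht
    have hpow : Tendsto (fun x : ℝ ↦ x ^ b) (𝓝 t) (𝓝 (t ^ b)) :=
      (continuousAt_rpow_const t b (Or.inr hb.le)).tendsto
    exact (tendsto_measure_lt_of_tendstoInDistribution h ht).comp (tendsto_id.prodMap hpow)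

-- `hbp` excludes `p = ∞`, because `∞.toReal = 0`.
theorem tendsto_mul_tsum_measureReal_rpow_lt {X : ℕ → Ω → ℝ} {Y : Ω → ℝ} {p : ℝ≥0∞} {b : ℝ}
    (hbp : 1 < b * p.toReal) (hX : ∀ n, AEMeasurable (X n) μ) (hY : MemLp Y p μ)
    (h : Tendsto (fun n ↦ eLpNorm (X n - Y) p μ) atTop (𝓝 0)) :
    Tendsto (fun δ : ℝ ↦ δ * ∑' k : ℕ, μ.real {ω | (δ * (k + 1)) ^ b < X (k + 1) ω})
      (𝓝[>] 0) (𝓝 (∫ ω, (Y ω)⁺ ^ b⁻¹ ∂μ)) := by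
  have hp_pos : 0 < p.toReal := by
    refine ENNReal.toReal_nonneg.lt_of_ne' fun hp ↦ ?_
    rw [hp, mul_zero] at hbp
    exact hbp.not_gt one_pos
  obtain ⟨hp₀, hp⟩ := ENNReal.toReal_pos_iff.1 hp_pos
  have hb : 0 < b := pos_of_mul_pos_left (one_pos.trans hbp) hp_pos.le
  have hdist : TendstoInDistribution X atTop Y (fun _ ↦ μ) μ :=
    (tendstoInMeasure_of_tendsto_eLpNorm_of_ne_top hp₀.ne' hp.ne
      (fun n ↦ (hX n).aestronglyMeasurable) hY.1 h).tendstoInDistribution hX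
  obtain ⟨M, hM, hXM⟩ := exists_eventually_eLpNorm_le_of_tendsto
    (fun n ↦ (hX n).aestronglyMeasurable) hY h
  have htail : ∀ᶠ n in atTop, ∀ s > 0,
      μ {ω | s < X n ω} ≤ M ^ p.toReal * ENNReal.ofReal (s ^ (-p.toReal)) := by
    filter_upwards [hXM] with n hn s hs
    exact (measure_lt_le_eLpNorm_rpow_mul (hX n) hp₀.ne' hp.ne hs).trans (by gcongr)
  have hint : Integrable (fun ω ↦ (Y ω)⁺ ^ b⁻¹) μ :=
    integrable_posPart_rpow hY (inv_nonneg.2 hb.le)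
      (ENNReal.ofReal_le_of_le_toReal ((inv_le_iff_one_le_mul₀' hb).2 hbp.le))
  have hlim := tendsto_mul_tsum_measure_rpow_lt hb hbp hdist
    (ENNReal.rpow_ne_top_of_nonneg hp_pos.le hM) htail
  rw [← ofReal_integral_eq_lintegral_ofReal hint (.of_forall fun ω ↦ by positivity)] at hlim
  have hreal := (ENNReal.tendsto_toReal ENNReal.ofReal_ne_top).comp hlim
  rw [ENNReal.toReal_ofReal (integral_nonneg fun ω ↦ by positivity)] at hreal
  refine hreal.congr' ?_
  filter_upwards [self_mem_nhdsWithin] with δ (hδ : 0 < δ)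
  rw [Function.comp_apply, ENNReal.toReal_mul, ENNReal.toReal_ofReal hδ.le,
    ENNReal.tsum_toReal_eq fun _ ↦ measure_ne_top _ _]
  rfl

end SeriesOfTails

section Rescaling

lemma tendsto_div_rpow_inv_nhdsGT_zero {b c : ℝ} (hb : 0 < b) (hc : 0 < c) :
    Tendsto (fun ε : ℝ ↦ (ε / c) ^ b⁻¹) (𝓝[>] 0) (𝓝[>] 0) := by
  refine tendsto_nhdsWithin_iff.2 ⟨?_, ?_⟩
  · have hcont : Continuous fun ε : ℝ ↦ (ε / c) ^ b⁻¹ :=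
      (continuous_id.div_const c).rpow_const fun _ ↦ Or.inr (by positivity)
    refine (hcont.tendsto' 0 0 ?_).mono_left nhdsWithin_le_nhds
    rw [zero_div, zero_rpow (inv_ne_zero hb.ne')]
  · filter_upwards [self_mem_nhdsWithin] with ε (hε : 0 < ε)
    exact rpow_pos_of_pos (div_pos hε hc) _

lemma div_rpow_inv_mul_rpow_lt_abs_div_iff {ε c x : ℝ} (hε : 0 ≤ ε) (hc : 0 < c) (hx : 0 < x)
    (a : ℝ) {b : ℝ} (hb : b ≠ 0) (v : ℝ) :
    ((ε / c) ^ b⁻¹ * x) ^ b < |v / (c * x ^ a)| ↔ ε * x ^ (a + b) < |v| := by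
  have hscale : 0 < c * x ^ a := by positivity
  have hthreshold : ε / c * x ^ b * (c * x ^ a) = ε * x ^ (a + b) := by
    rw [rpow_add hx]
    field_simp
  rw [mul_rpow (by positivity) hx.le, rpow_inv_rpow (by positivity) hb, abs_div,
    abs_of_pos hscale, lt_div_iff₀ hscale, hthreshold]

end Rescaling

lemma measurable_hermiteVariation {Ω : Type*} [MeasureSpace Ω] {B : ℝ → Ω → ℝ}
    (hB : ∀ t, Measurable (B t)) (H : ℝ) (q n : ℕ) : Measurable (hermiteVariation B H q n) :=
  Finset.measurable_sum _ fun _ _ ↦ (Polynomial.continuous_aeval _).measurable.comp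
    (((hB _).sub (hB _)).const_mul _)

lemma memLp_two_abs_of_integrable_sq {Ω : Type*} [MeasurableSpace Ω] {μ : Measure Ω} {Z : Ω → ℝ}
    (hZ : Integrable (fun ω ↦ Z ω ^ 2) μ) : MemLp (fun ω ↦ |Z ω|) 2 μ := by
  have hmeas : AEMeasurable (fun ω ↦ |Z ω|) μ := by
    simpa only [Real.sqrt_sq_eq_abs] using hZ.aemeasurable.sqrt
  rw [memLp_two_iff_integrable_sq hmeas.aestronglyMeasurable]
  simpa only [sq_abs] using hZ

lemma one_lt_one_sub_mul_one_sub_mul_two {q H : ℝ} (hq : 0 < q) (hH : 1 - 1 / (2 * q) < H) :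
    1 < (1 - q * (1 - H)) * 2 := by
  have hlt : 1 - H < 1 / (2 * q) := by linarith
  rw [lt_div_iff₀ (by positivity)] at hlt
  linarith

-- `MemLp` of `|Z|` rather than of `Z`: integrability of `Z ^ 2` does not make the sign of `Z`
-- measurable.
theorem stmt_13_general {Ω : Type*} [MeasurableSpace Ω] {μ : Measure Ω} [IsProbabilityMeasure μ]
    {V : ℕ → Ω → ℝ} {Z : Ω → ℝ} {p : ℝ≥0∞} {a b c : ℝ} (hc : 0 < c) (hbp : 1 < b * p.toReal)
    (hV : ∀ n, AEMeasurable (V n) μ) (hZ : MemLp (fun ω ↦ |Z ω|) p μ)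
    (hconv : Tendsto (fun n : ℕ ↦ eLpNorm (fun ω ↦ V n ω / (c * (n : ℝ) ^ a) - Z ω) p μ)
      atTop (𝓝 0)) :
    Tendsto
      (fun ε : ℝ ↦ ε ^ b⁻¹ *
        ∑' n : ℕ, μ.real {ω | ε * ((n : ℝ) + 1) ^ (a + b) < |V (n + 1) ω|})
      (𝓝[>] 0) (𝓝 (c ^ b⁻¹ * ∫ ω, |Z ω| ^ b⁻¹ ∂μ)) := by
  have hb : 0 < b := pos_of_mul_pos_left (one_pos.trans hbp) ENNReal.toReal_nonneg
  have hconv_abs : Tendsto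
      (fun n : ℕ ↦ eLpNorm ((fun ω ↦ |V n ω / (c * (n : ℝ) ^ a)|) - fun ω ↦ |Z ω|) p μ)
      atTop (𝓝 0) :=
    tendsto_of_tendsto_of_tendsto_of_le_of_le tendsto_const_nhds hconv (fun _ ↦ zero_le)
      fun _ ↦ eLpNorm_mono fun _ ↦ abs_abs_sub_abs_le _ _
  have hlim := tendsto_mul_tsum_measureReal_rpow_lt hbp
    (fun n ↦ ((hV n).div_const _).abs) hZ hconv_abs
  simp only [posPart_eq_self.2 (abs_nonneg (Z _))] at hlim
  refine ((hlim.comp (tendsto_div_rpow_inv_nhdsGT_zero hb hc)).const_mul (c ^ b⁻¹)).congr' ?_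
  filter_upwards [self_mem_nhdsWithin] with ε (hε : 0 < ε)
  have hevent (n : ℕ) (ω : Ω) := div_rpow_inv_mul_rpow_lt_abs_div_iff hε.le hc
    n.cast_add_one_pos a hb.ne' (V (n + 1) ω)
  simp only [Function.comp_apply, Nat.cast_add, Nat.cast_one, hevent]
  rw [← mul_assoc, ← mul_rpow hc.le (by positivity), mul_div_cancel₀ _ hc.ne']

theorem stmt_13 {Ω : Type*} [MeasureSpace Ω] [IsProbabilityMeasure (ℙ : Measure Ω)]
    (q : ℕ) (hq : 2 ≤ q) (H : ℝ) (hH0 : 1 - 1 / (2 * q) < H) (hH1 : H < 1)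
    (B : ℝ → Ω → ℝ) (hB : IsFractionalBrownianMotion B H)
    (c₂ : ℝ) (hc₂ : 0 < c₂) (Z : Ω → ℝ)
    (hZvar : (∫ ω, (Z ω) ^ 2 ∂(ℙ : Measure Ω)) = 1)
    (hconv : Tendsto
      (fun n : ℕ => eLpNorm
        (fun ω => hermiteVariation B H q n ω / (c₂ * (n : ℝ) ^ (1 - q * (1 - H))) - Z ω)
        2 (ℙ : Measure Ω))
      atTop (𝓝 0)) :
    Tendsto
      (fun ε : ℝ =>
        ε ^ (1 / (1 - q * (1 - H))) *
          ∑' n : ℕ,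
            (ℙ {ω | ε * ((n : ℝ) + 1) ^ (2 - 2 * q * (1 - H)) <
              |hermiteVariation B H q (n + 1) ω|}).toReal)
      (𝓝[>] 0)
      (𝓝 (c₂ ^ (1 / (1 - q * (1 - H))) *
        ∫ ω, |Z ω| ^ (1 / (1 - q * (1 - H))) ∂(ℙ : Measure Ω))) := by
  have hbp : 1 < (1 - (q : ℝ) * (1 - H)) * (2 : ℝ≥0∞).toReal :=
    one_lt_one_sub_mul_one_sub_mul_two (by positivity) hH0
  have hZ : Integrable fun ω ↦ Z ω ^ 2 := .of_integral_ne_zero (hZvar ▸ one_ne_zero)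
  have hexp : 2 - 2 * (q : ℝ) * (1 - H) = (1 - q * (1 - H)) + (1 - q * (1 - H)) := by ring
  simp only [one_div, hexp]
  exact stmt_13_general hc₂ hbp
    (fun n ↦ (measurable_hermiteVariation hB.measurable H q n).aemeasurable)
    (memLp_two_abs_of_integrable_sq hZ) hconv
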